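/- arXiv:2104.13356 — 4 statements merged into one kernel-verified Lean document; each statement's English description precedes it below -/
import Mathlib

section
/- Let α ∈ (0,1) and ε ∈ (0,1) be given. Then there exists h₀ > 0 such that for all h ∈ (0, h₀], every complex number z satisfying the resonance equation h^(−α)·exp(2iz/h) − h^(−α) + 2iz/h = 0 and ε ≤ |z| ≤ 1/ε obeys 0 ≤ −Im z − (h/2)·ln|2·h^(α−1)·Re z| ≤ (5/4)·h^(3−2α)·ε^(−2). -/
open Complex Real

/-!
In the variables `w = 2iz/h` and `c = h ^ (-α)` the resonance equation reads `exp w = 1 - w / c`.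
Comparing absolute values gives the exact formula
`Re w - log |Im w / c| = log (1 + ((c - Re w) / Im w) ^ 2) / 2`, whose left side is `2 / h` times
the quantity to be estimated; so it is nonnegative, and it remains to see that the quotient is
small. If `2 c ≤ |w|`, then `|exp w| ≥ |w| / c - 1 ≥ 1`, hence `Re w ≥ 0`. If moreover
`1 + |w| / c ≤ exp c`, then `exp (Re w) ≤ 1 + |w| / c ≤ exp c`, so that `0 ≤ Re w ≤ c ≤ |w| / 2`:
the numerator is at most `c` in absolute value, while `Im w` is comparable with `|w|`. In terms of
`z`, the first condition is `h ^ (1 - α) ≤ |z|`, and the second holds for small `h` as soon as `|z|`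
is polynomially bounded in `1 / h`.
-/

open Filter Topology Asymptotics

/-- The resonance equation in the variables `c = h ^ (-α)` and `w = 2iz/h`, in which `h` no longer
appears separately. -/
def IsScaledResonance (c : ℝ) (w : ℂ) : Prop :=
  (c : ℂ) * Complex.exp w - c + w = 0

namespace IsScaledResonance

variable {c : ℝ} {w : ℂ}

lemma exp_eq (hw : IsScaledResonance c w) (hc : c ≠ 0) : Complex.exp w = 1 - w / c := by
  have hc' : (c : ℂ) ≠ 0 := mod_cast hc
  unfold IsScaledResonance at hw
  field_simp
  linear_combination hw

lemma exp_re_eq_norm (hw : IsScaledResonance c w) (hc : c ≠ 0) :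
    Real.exp w.re = ‖1 - w / c‖ := by
  rw [← Complex.norm_exp, hw.exp_eq hc]

lemma exp_re_sq (hw : IsScaledResonance c w) (hc : c ≠ 0) :
    Real.exp w.re ^ 2 = (1 - w.re / c) ^ 2 + (w.im / c) ^ 2 := by
  rw [hw.exp_re_eq_norm hc, Complex.sq_norm, Complex.normSq_apply]
  simp only [sub_re, sub_im, one_re, one_im, div_ofReal_re, div_ofReal_im]
  ring

lemma re_sub_log_abs_im_div (hw : IsScaledResonance c w) (hc : c ≠ 0) (him : w.im ≠ 0) :
    w.re - Real.log |w.im / c| = Real.log (1 + ((c - w.re) / w.im) ^ 2) / 2 := by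
  have quotient : 1 + ((c - w.re) / w.im) ^ 2 = Real.exp w.re ^ 2 / (w.im / c) ^ 2 := by
    rw [hw.exp_re_sq hc]
    field_simp
    ring
  rw [quotient, Real.log_div (by positivity) (by positivity), Real.log_pow, Real.log_pow,
    Real.log_exp, Real.log_abs]
  push_cast
  ring

lemma re_nonneg (hw : IsScaledResonance c w) (hc : 0 < c) (hlarge : 2 * c ≤ ‖w‖) :
    0 ≤ w.re := by
  have norm_div_eq : ‖w / c‖ = ‖w‖ / c := by rw [norm_div, Complex.norm_of_nonneg hc.le]
  rw [← Real.one_le_exp_iff]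
  calc 1 ≤ ‖w‖ / c - 1 := by rw [le_sub_iff_add_le, le_div_iff₀ hc]; linarith
    _ ≤ ‖1 - w / c‖ := by
      rw [norm_sub_rev, ← norm_div_eq]
      simpa only [norm_one] using norm_sub_norm_le (w / c) 1
    _ = Real.exp w.re := (hw.exp_re_eq_norm hc.ne').symm

lemma exp_re_le (hw : IsScaledResonance c w) (hc : 0 < c) :
    Real.exp w.re ≤ 1 + ‖w‖ / c := by
  rw [hw.exp_re_eq_norm hc.ne']
  simpa only [norm_one, norm_div, Complex.norm_of_nonneg hc.le] using norm_sub_le 1 (w / c)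

lemma re_le (hw : IsScaledResonance c w) (hc : 0 < c) (hexp : 1 + ‖w‖ / c ≤ Real.exp c) :
    w.re ≤ c :=
  Real.exp_le_exp.1 ((hw.exp_re_le hc).trans hexp)

lemma three_mul_norm_sq_le_four_mul_im_sq (hw : IsScaledResonance c w) (hc : 0 < c)
    (hlarge : 2 * c ≤ ‖w‖) (hexp : 1 + ‖w‖ / c ≤ Real.exp c) :
    3 * ‖w‖ ^ 2 ≤ 4 * w.im ^ 2 := by
  have re_sq_le : w.re ^ 2 ≤ (‖w‖ / 2) ^ 2 :=
    pow_le_pow_left₀ (hw.re_nonneg hc hlarge) (by linarith [hw.re_le hc hexp]) 2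
  have norm_sq : ‖w‖ ^ 2 = w.re ^ 2 + w.im ^ 2 := by
    rw [Complex.sq_norm, Complex.normSq_apply]; ring
  linarith

theorem re_sub_log_abs_im_div_mem_Icc (hw : IsScaledResonance c w) (hc : 0 < c)
    (hlarge : 2 * c ≤ ‖w‖) (hexp : 1 + ‖w‖ / c ≤ Real.exp c) :
    w.re - Real.log |w.im / c| ∈ Set.Icc 0 (2 / 3 * (c / ‖w‖) ^ 2) := by
  have norm_pos : 0 < ‖w‖ := by linarith
  have im_sq_ge := hw.three_mul_norm_sq_le_four_mul_im_sq hc hlarge hexp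
  have im_sq_pos : 0 < w.im ^ 2 := by nlinarith
  rw [hw.re_sub_log_abs_im_div hc.ne' (pow_ne_zero_iff two_ne_zero |>.1 im_sq_pos.ne')]
  set q := ((c - w.re) / w.im) ^ 2
  have q_nonneg : 0 ≤ q := sq_nonneg _
  have q_le : q ≤ 4 / 3 * (c / ‖w‖) ^ 2 := by
    have num_le : (c - w.re) ^ 2 ≤ c ^ 2 :=
      pow_le_pow_left₀ (sub_nonneg.2 (hw.re_le hc hexp))
        (sub_le_self _ (hw.re_nonneg hc hlarge)) 2
    calc q = (c - w.re) ^ 2 / w.im ^ 2 := div_pow ..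
      _ ≤ c ^ 2 / (3 / 4 * ‖w‖ ^ 2) := by gcongr; linarith
      _ = 4 / 3 * (c / ‖w‖) ^ 2 := by field_simp
  have log_le : Real.log (1 + q) ≤ q := by
    linarith [Real.log_le_sub_one_of_pos (show 0 < 1 + q by positivity)]
  exact ⟨by linarith [Real.log_nonneg (show 1 ≤ 1 + q by linarith)], by linarith⟩

end IsScaledResonance

lemma two_mul_I_mul_div_ofReal_re (z : ℂ) (h : ℝ) : (2 * I * z / h).re = -2 * z.im / h := by
  simp [div_ofReal_re]

lemma two_mul_I_mul_div_ofReal_im (z : ℂ) (h : ℝ) : (2 * I * z / h).im = 2 * z.re / h := by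
  simp [div_ofReal_im]

lemma norm_two_mul_I_mul_div_ofReal (z : ℂ) {h : ℝ} (hh : 0 ≤ h) :
    ‖2 * I * z / h‖ = 2 * ‖z‖ / h := by
  simp [abs_of_nonneg hh]

theorem IsScaledResonance.width_mem_Icc {c h : ℝ} {z : ℂ}
    (hz : IsScaledResonance c (2 * I * z / h)) (hc : 0 < c) (hh : 0 < h) (hlarge : h * c ≤ ‖z‖)
    (hexp : 1 + 2 * ‖z‖ / (h * c) ≤ Real.exp c) :
    -z.im - h / 2 * Real.log |2 * z.re / (h * c)| ∈
      Set.Icc 0 (1 / 12 * (h ^ 3 * c ^ 2) / ‖z‖ ^ 2) := by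
  have bounds := hz.re_sub_log_abs_im_div_mem_Icc hc
    (by rw [norm_two_mul_I_mul_div_ofReal z hh.le, le_div_iff₀ hh]; linarith)
    (by rwa [norm_two_mul_I_mul_div_ofReal z hh.le, div_div])
  rw [norm_two_mul_I_mul_div_ofReal z hh.le, two_mul_I_mul_div_ofReal_re,
    two_mul_I_mul_div_ofReal_im, div_div] at bounds
  have width_eq : -z.im - h / 2 * Real.log |2 * z.re / (h * c)| =
      h / 2 * (-2 * z.im / h - Real.log |2 * z.re / (h * c)|) := by
    field_simp
  have bound_eq : 1 / 12 * (h ^ 3 * c ^ 2) / ‖z‖ ^ 2 =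
      h / 2 * (2 / 3 * (c / (2 * ‖z‖ / h)) ^ 2) := by
    field_simp
    norm_num
  rw [width_eq, bound_eq]
  exact ⟨mul_nonneg (half_pos hh).le bounds.1,
    mul_le_mul_of_nonneg_left bounds.2 (half_pos hh).le⟩

theorem resonance_width_mem_Icc {α h : ℝ} {z : ℂ} (hh : 0 < h)
    (hz : IsScaledResonance (h ^ (-α)) (2 * I * z / h)) (hlarge : h ^ (1 - α) ≤ ‖z‖)
    (hexp : 1 + 2 * ‖z‖ * h ^ (α - 1) ≤ Real.exp (h ^ (-α))) :
    -z.im - h / 2 * Real.log |2 * h ^ (α - 1) * z.re| ∈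
      Set.Icc 0 (1 / 12 * h ^ (3 - 2 * α) * ‖z‖ ^ (-2 : ℝ)) := by
  have rpow_one_sub : h ^ (1 - α) = h * h ^ (-α) := by
    rw [sub_eq_add_neg, Real.rpow_add hh, Real.rpow_one]
  have rpow_sub_one : h ^ (α - 1) = (h * h ^ (-α))⁻¹ := by
    rw [← rpow_one_sub, ← Real.rpow_neg hh.le, neg_sub]
  have rpow_three_sub : h ^ (3 - 2 * α) = h ^ 3 * (h ^ (-α)) ^ 2 := by
    rw [← Real.rpow_mul_natCast hh.le, ← Real.rpow_natCast h 3, ← Real.rpow_add hh]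
    push_cast
    ring_nf
  have norm_rpow : ‖z‖ ^ (-2 : ℝ) = (‖z‖ ^ 2)⁻¹ := by
    rw [Real.rpow_neg (norm_nonneg z), Real.rpow_two]
  rw [rpow_one_sub] at hlarge
  rw [rpow_sub_one, ← div_eq_mul_inv] at hexp
  rw [rpow_sub_one, rpow_three_sub, norm_rpow, mul_right_comm 2, ← div_eq_mul_inv,
    ← div_eq_mul_inv]
  exact hz.width_mem_Icc (Real.rpow_pos_of_pos hh _) hh hlarge hexp

lemma isLittleO_rpow_exp_rpow_neg_nhdsGT_zero {α : ℝ} (hα : 0 < α) (s : ℝ) :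
    (fun h : ℝ ↦ h ^ s) =o[𝓝[>] 0] fun h ↦ Real.exp (h ^ (-α)) := by
  refine ((isLittleO_rpow_exp_atTop (-s / α)).comp_tendsto
    (tendsto_rpow_neg_nhdsGT_zero (neg_lt_zero.2 hα))).congr' ?_ .rfl
  filter_upwards [self_mem_nhdsWithin] with h hh
  rw [Function.comp_apply, ← Real.rpow_mul (Set.mem_Ioi.1 hh).le]
  congr 1
  field_simp

lemma eventually_one_add_mul_rpow_le_exp_rpow_neg {α s N : ℝ} {R : ℝ → ℝ} (hα : 0 < α)
    (hR : R =O[𝓝[>] 0] fun h ↦ h ^ (-N)) :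
    ∀ᶠ h in 𝓝[>] 0, 1 + R h * h ^ s ≤ Real.exp (h ^ (-α)) := by
  have mul_isBigO : (fun h ↦ R h * h ^ s) =O[𝓝[>] 0] fun h ↦ h ^ (-N + s) := by
    refine (hR.mul (isBigO_refl (fun h : ℝ ↦ h ^ s) _)).congr' .rfl ?_
    filter_upwards [self_mem_nhdsWithin] with h hh using (Real.rpow_add hh _ _).symm
  have one_isLittleO : (fun _ : ℝ ↦ (1 : ℝ)) =o[𝓝[>] 0] fun h ↦ Real.exp (h ^ (-α)) := by
    simpa only [Real.rpow_zero] using isLittleO_rpow_exp_rpow_neg_nhdsGT_zero hα 0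
  have sum_isLittleO := one_isLittleO.add (mul_isBigO.trans_isLittleO
    (isLittleO_rpow_exp_rpow_neg_nhdsGT_zero hα _))
  filter_upwards [sum_isLittleO.eventuallyLE] with h hh
  rw [Real.norm_of_nonneg (Real.exp_pos _).le] at hh
  exact (Real.le_norm_self _).trans hh

lemma eventually_rpow_le_nhdsGT_zero {s r : ℝ} (hs : 0 < s) (hr : 0 < r) :
    ∀ᶠ h : ℝ in 𝓝[>] 0, h ^ s ≤ r := by
  have tendsto_zero := (Real.continuousAt_rpow_const 0 s (Or.inr hs.le)).tendsto
  rw [Real.zero_rpow hs.ne'] at tendsto_zero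
  exact (tendsto_zero.mono_left nhdsWithin_le_nhds).eventually (ge_mem_nhds hr)

theorem resonance_width_alpha_small_general {α N : ℝ} {r R : ℝ → ℝ} (hα : 0 < α)
    (hr : ∀ᶠ h in 𝓝[>] 0, h ^ (1 - α) ≤ r h) (hR : R =O[𝓝[>] 0] fun h ↦ h ^ (-N)) :
    ∃ h₀ > 0, ∀ h : ℝ, h ∈ Set.Ioc 0 h₀ → ∀ z : ℂ,
      ((h ^ (-α) : ℝ) : ℂ) * Complex.exp (2 * Complex.I * z / (h : ℂ))
          - ((h ^ (-α) : ℝ) : ℂ) + 2 * Complex.I * z / (h : ℂ) = 0 →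
      r h ≤ ‖z‖ → ‖z‖ ≤ R h →
      0 ≤ -z.im - h / 2 * Real.log |2 * h ^ (α - 1) * z.re| ∧
        -z.im - h / 2 * Real.log |2 * h ^ (α - 1) * z.re|
          ≤ 1 / 12 * h ^ (3 - 2 * α) * r h ^ (-2 : ℝ) := by
  obtain ⟨h₀, h₀_pos, small⟩ := mem_nhdsGT_iff_exists_Ioc_subset.1
    (hr.and (eventually_one_add_mul_rpow_le_exp_rpow_neg (s := α - 1) hα (hR.const_mul_left 2)))
  refine ⟨h₀, h₀_pos, fun h hh z hz hlower hupper ↦ ?_⟩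
  obtain ⟨hr_h, hexp⟩ := small hh
  have h_pos : 0 < h := hh.1
  have r_pos : 0 < r h := (Real.rpow_pos_of_pos h_pos _).trans_le hr_h
  have width := resonance_width_mem_Icc h_pos hz (hr_h.trans hlower)
    (le_trans (by gcongr) hexp)
  refine ⟨width.1, width.2.trans ?_⟩
  gcongr ?_ * ?_
  exact Real.rpow_le_rpow_of_nonpos r_pos hlower (by norm_num)

theorem resonance_width_alpha_small (α ε : ℝ) (hα : α ∈ Set.Ioo (0:ℝ) 1)
    (hε : ε ∈ Set.Ioo (0:ℝ) 1) :
    ∃ h₀ > 0, ∀ h : ℝ, h ∈ Set.Ioc 0 h₀ → ∀ z : ℂ,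
      ((h ^ (-α) : ℝ) : ℂ) * Complex.exp (2 * Complex.I * z / (h : ℂ))
          - ((h ^ (-α) : ℝ) : ℂ) + 2 * Complex.I * z / (h : ℂ) = 0 →
      ε ≤ ‖z‖ → ‖z‖ ≤ 1 / ε →
      0 ≤ -z.im - h / 2 * Real.log |2 * h ^ (α - 1) * z.re| ∧
        -z.im - h / 2 * Real.log |2 * h ^ (α - 1) * z.re|
          ≤ 5 / 4 * h ^ (3 - 2 * α) * ε ^ (-2 : ℝ) := by
  obtain ⟨h₀, h₀_pos, width⟩ := resonance_width_alpha_small_general (N := 0)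
    (r := fun _ ↦ ε) (R := fun _ ↦ 1 / ε) hα.1
    (eventually_rpow_le_nhdsGT_zero (sub_pos.2 hα.2) hε.1)
    (by simpa only [neg_zero, Real.rpow_zero] using isBigO_const_const _ one_ne_zero _)
  refine ⟨h₀, h₀_pos, fun h hh z hz hl hu ↦ (width h hh z hz hl hu).imp_right (·.trans ?_)⟩
  have h_pos := hh.1
  have ε_pos := hε.1
  gcongr ?_ * _ * _
  norm_num
end

section
/- Let α ∈ (0,1) and ε ∈ (0,1) be given. Then there exists h₀ > 0 such that for all h ∈ (0, h₀], every complex number z satisfying the resonance equation h^(−α)·exp(2iz/h) − h^(−α) + 2iz/h = 0 and ε ≤ |z| ≤ 1/ε obeys |Re z| ≥ ε/3 and |Im z| ≤ h·ln(4·ε^(−1)·h^(α−1)). -/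
open Complex Real

/-!
With `c = h ^ (-α)` and `w = 2 i z / h` the resonance equation reads `exp w = 1 - w / c`. If
`Re w` were negative, the left side would have modulus less than `1` and the right side real part
greater than `1`; hence `Re w ≥ 0`, and comparing moduli gives `exp (Re w) ≤ 1 + ‖w‖ / c`.
In terms of `z` this is `|Im z| ≤ (h / 2) log (1 + 2 ‖z‖ h ^ (α - 1))`, which tends to `0` with `h`
uniformly for bounded `z`, so that a resonance away from the origin has real part away from `0`.
-/

open Filter Topology

lemma exp_eq_one_sub_div_of_mul_exp_sub_add_eq_zero {c w : ℂ} (hc : c ≠ 0)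
    (hw : c * Complex.exp w - c + w = 0) : Complex.exp w = 1 - w / c := by
  field_simp
  linear_combination hw

lemma re_nonneg_of_mul_exp_sub_add_eq_zero {c : ℝ} {w : ℂ} (hc : 0 < c)
    (hw : (c : ℂ) * Complex.exp w - c + w = 0) : 0 ≤ w.re := by
  by_contra! hneg
  have norm_exp_lt : ‖Complex.exp w‖ < 1 := by
    rwa [Complex.norm_exp, Real.exp_lt_one_iff]
  have re_exp : (Complex.exp w).re = 1 - w.re / c := by
    rw [exp_eq_one_sub_div_of_mul_exp_sub_add_eq_zero (ofReal_ne_zero.2 hc.ne') hw, sub_re, one_re,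
      div_ofReal_re]
  linarith [Complex.re_le_norm (Complex.exp w), div_neg_of_neg_of_pos hneg hc]

lemma abs_re_le_log_of_mul_exp_sub_add_eq_zero {c : ℝ} {w : ℂ} (hc : 0 < c)
    (hw : (c : ℂ) * Complex.exp w - c + w = 0) : |w.re| ≤ Real.log (1 + ‖w‖ / c) := by
  rw [abs_of_nonneg (re_nonneg_of_mul_exp_sub_add_eq_zero hc hw),
    Real.le_log_iff_exp_le (by positivity)]
  calc Real.exp w.re = ‖1 - w / c‖ := by
        rw [← Complex.norm_exp,
          exp_eq_one_sub_div_of_mul_exp_sub_add_eq_zero (ofReal_ne_zero.2 hc.ne') hw]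
    _ ≤ ‖(1 : ℂ)‖ + ‖w / c‖ := norm_sub_le _ _
    _ = 1 + ‖w‖ / c := by rw [norm_one, norm_div, Complex.norm_of_nonneg hc.le]

/-- `z` satisfies the resonance equation with coupling `h ^ (-α)` at semiclassical parameter `h`. -/
def IsResonance (α h : ℝ) (z : ℂ) : Prop :=
  ((h ^ (-α) : ℝ) : ℂ) * Complex.exp (2 * Complex.I * z / (h : ℂ))
    - ((h ^ (-α) : ℝ) : ℂ) + 2 * Complex.I * z / (h : ℂ) = 0

namespace IsResonance

variable {α h : ℝ} {z : ℂ}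

lemma abs_im_le (hz : IsResonance α h z) (hh : 0 < h) :
    |z.im| ≤ h / 2 * Real.log (1 + 2 * ‖z‖ * h ^ (α - 1)) := by
  have abs_re_eq : |(2 * Complex.I * z / (h : ℂ)).re| = |z.im| / (h / 2) := by
    have re_eq : (2 * Complex.I * z).re = -(2 * z.im) := by simp
    rw [div_ofReal_re, re_eq, abs_div, abs_neg, abs_mul, abs_two, abs_of_pos hh]
    field_simp
  have norm_div_eq :
      ‖2 * Complex.I * z / (h : ℂ)‖ / h ^ (-α) = 2 * ‖z‖ * h ^ (α - 1) := by
    have norm_eq : ‖2 * Complex.I * z‖ = 2 * ‖z‖ := by simp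
    rw [Real.rpow_neg hh.le, Real.rpow_sub_one hh.ne', norm_div, norm_eq,
      Complex.norm_of_nonneg hh.le]
    field_simp
  have bound := abs_re_le_log_of_mul_exp_sub_add_eq_zero (Real.rpow_pos_of_pos hh (-α)) hz
  rwa [abs_re_eq, norm_div_eq, div_le_iff₀' (half_pos hh)] at bound

lemma abs_im_le_mul_log {R : ℝ} (hz : IsResonance α h z) (hα : α ≤ 1) (hh : 0 < h) (hh1 : h ≤ 1)
    (hR : 1 ≤ R) (hzR : ‖z‖ ≤ R) :
    |z.im| ≤ h * Real.log (4 * R * h ^ (α - 1)) := by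
  have one_le_rpow : 1 ≤ h ^ (α - 1) :=
    Real.one_le_rpow_of_pos_of_le_one_of_nonpos hh hh1 (sub_nonpos.2 hα)
  have one_le_mul : 1 ≤ R * h ^ (α - 1) :=
    one_le_mul_of_one_le_of_one_le hR one_le_rpow
  have norm_mul_le : ‖z‖ * h ^ (α - 1) ≤ R * h ^ (α - 1) := by gcongr
  have log_nonneg : 0 ≤ Real.log (4 * R * h ^ (α - 1)) := Real.log_nonneg (by linarith)
  calc |z.im| ≤ h / 2 * Real.log (1 + 2 * ‖z‖ * h ^ (α - 1)) := hz.abs_im_le hh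
    _ ≤ h / 2 * Real.log (4 * R * h ^ (α - 1)) := by
        gcongr
        linarith
    _ ≤ h * Real.log (4 * R * h ^ (α - 1)) := by
        gcongr
        exact half_le_self hh.le

end IsResonance

lemma tendsto_mul_log_const_mul_rpow_nhdsGT_zero {c : ℝ} (hc : c ≠ 0) (s : ℝ) :
    Tendsto (fun x : ℝ ↦ x * Real.log (c * x ^ s)) (𝓝[>] 0) (𝓝 0) := by
  have expanded : Tendsto (fun x : ℝ ↦ x * Real.log c + s * (x * Real.log x)) (𝓝[>] 0) (𝓝 0) := by
    have cont : Continuous fun x : ℝ ↦ x * Real.log c + s * (x * Real.log x) :=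
      (continuous_id.mul_const _).add (Real.continuous_mul_log.const_mul s)
    simpa using (cont.tendsto 0).mono_left nhdsWithin_le_nhds
  refine expanded.congr' ?_
  filter_upwards [self_mem_nhdsWithin] with x (hx : 0 < x)
  rw [Real.log_mul hc (Real.rpow_pos_of_pos hx s).ne', Real.log_rpow hx]
  ring

theorem resonance_re_im_bounds_general {α ε : ℝ} (hα : α ≤ 1) (hε : 0 < ε) :
    ∃ h₀ > 0, ∀ h : ℝ, h ∈ Set.Ioc 0 h₀ → ∀ z : ℂ, IsResonance α h z →
      ε ≤ ‖z‖ → ‖z‖ ≤ 1 / ε →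
      ε / 3 ≤ |z.re| ∧ |z.im| ≤ h * Real.log (4 * ε⁻¹ * h ^ (α - 1)) := by
  have bound_lt : ∀ᶠ h : ℝ in 𝓝[>] 0, h * Real.log (4 * ε⁻¹ * h ^ (α - 1)) < 2 * ε / 3 :=
    (tendsto_mul_log_const_mul_rpow_nhdsGT_zero (by positivity) (α - 1)).eventually_lt_const
      (by positivity)
  obtain ⟨h₀, h₀_pos, hh₀⟩ := mem_nhdsGT_iff_exists_Ioc_subset.1
    (bound_lt.and (Ioc_mem_nhdsGT zero_lt_one))
  refine ⟨h₀, h₀_pos, fun h hh z hz hεz hzε ↦ ?_⟩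
  obtain ⟨small, h_pos, h_le_one⟩ := hh₀ hh
  have one_le_inv : 1 ≤ ε⁻¹ := by
    have sq_le_one : ε * ε ≤ 1 := (le_div_iff₀ hε).1 (hεz.trans hzε)
    exact (one_le_inv₀ hε).2 (by nlinarith)
  have im_le := hz.abs_im_le_mul_log hα h_pos h_le_one one_le_inv (by rwa [← one_div])
  exact ⟨by linarith [Complex.norm_le_abs_re_add_abs_im z], im_le⟩

theorem resonance_re_im_bounds (α ε : ℝ) (hα : α ∈ Set.Ioo (0:ℝ) 1)
    (hε : ε ∈ Set.Ioo (0:ℝ) 1) :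
    ∃ h₀ > 0, ∀ h : ℝ, h ∈ Set.Ioc 0 h₀ → ∀ z : ℂ,
      ((h ^ (-α) : ℝ) : ℂ) * Complex.exp (2 * Complex.I * z / (h : ℂ))
          - ((h ^ (-α) : ℝ) : ℂ) + 2 * Complex.I * z / (h : ℂ) = 0 →
      ε ≤ ‖z‖ → ‖z‖ ≤ 1 / ε →
      ε / 3 ≤ |z.re| ∧ |z.im| ≤ h * Real.log (4 * ε⁻¹ * h ^ (α - 1)) :=
  resonance_re_im_bounds_general hα.2.le hε.1
end

section
/- Let α > 1 and ε ∈ (0,1) be given. Then there exists h₀ > 0 such that for all h ∈ (0, h₀] and all integers k with π²k² ≤ 4·ε^(−2)·h^(−2), one has | −ln|1 + h^α·ln(h^(−α)) + 2πik·h^α| + h^α·ln(h^(−α)) + 2π²k²·h^(2α) | ≤ 65·ε^(−4)·h^(4α−4) + h^(2α)·(ln(h^(−α)))². -/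
/-!
Put `x = h ^ α * log (h ^ (-α))` and `y = 2πk h ^ α`. Splitting
`log ‖1 + x + iy‖ = log (1 + x) + log (1 + y² / (1 + x)²) / 2` and expanding each logarithm to
second order bounds the error by `x² / 2 + x y² + y⁴ / 4`. The constraint on `k` gives `y² ≤ Y`
with `Y = 16 ε⁻² h ^ (2α - 2)`, so `y⁴ / 4` contributes at most `64 ε⁻⁴ h ^ (4α - 4)`. Only the
cross term `x Y` is delicate: as `h → 0⁺`, one of `x` and `Y` is negligible compared with the other
(which one depends on whether `α < 2`), so `x Y` is eventually below any fixed multiple of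
`x² + Y²`.
-/

open Complex Real

open Asymptotics Filter Topology

lemma sub_sq_div_two_le_log_one_add {x : ℝ} (hx : 0 ≤ x) :
    x - x ^ 2 / 2 ≤ Real.log (1 + x) := by
  refine le_trans ?_ (Real.le_log_one_add_of_nonneg hx)
  rw [le_div_iff₀ (by linarith)]
  nlinarith [pow_nonneg hx 3]

lemma log_one_add_le_self {x : ℝ} (hx : -1 < x) : Real.log (1 + x) ≤ x := by
  linarith [Real.log_le_sub_one_of_pos (show 0 < 1 + x by linarith)]

lemma log_norm_add_mul_I {a : ℝ} (ha : a ≠ 0) (y : ℝ) :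
    Real.log ‖(a : ℂ) + y * I‖ = Real.log a + Real.log (1 + y ^ 2 / a ^ 2) / 2 := by
  have factor : a ^ 2 + y ^ 2 = a ^ 2 * (1 + y ^ 2 / a ^ 2) := by field_simp
  rw [norm_add_mul_I, Real.log_sqrt (by positivity), factor,
    Real.log_mul (by positivity) (by positivity), Real.log_pow]
  push_cast
  ring

lemma sub_div_one_add_sq_le {x s : ℝ} (hx : -1 < x) (hs : 0 ≤ s) :
    s - s / (1 + x) ^ 2 ≤ 2 * x * s := by
  have one_add_pos : 0 < 1 + x := by linarith
  have bernoulli : 1 - 2 * x ≤ 1 / (1 + x) ^ 2 := by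
    rw [le_div_iff₀ (by positivity)]
    nlinarith [mul_nonneg (sq_nonneg x) one_add_pos.le, sq_nonneg x]
  calc s - s / (1 + x) ^ 2 = s * (1 - 1 / (1 + x) ^ 2) := by ring
    _ ≤ s * (2 * x) := by gcongr; linarith
    _ = 2 * x * s := by ring

lemma abs_neg_log_norm_one_add_add_mul_I_le {x : ℝ} (hx : 0 ≤ x) (y : ℝ) :
    |-Real.log ‖(1 : ℂ) + x + y * I‖ + x + y ^ 2 / 2| ≤ x ^ 2 / 2 + x * y ^ 2 + y ^ 4 / 4 := by
  set v := y ^ 2 / (1 + x) ^ 2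
  have v_nonneg : 0 ≤ v := by positivity
  have v_le : v ≤ y ^ 2 := div_le_self (sq_nonneg y) (one_le_pow₀ (by linarith))
  have sub_v_le : y ^ 2 - v ≤ 2 * x * y ^ 2 := sub_div_one_add_sq_le (by linarith) (sq_nonneg y)
  have v_sq_le : v ^ 2 ≤ y ^ 4 := by
    calc v ^ 2 ≤ (y ^ 2) ^ 2 := by gcongr
      _ = y ^ 4 := by ring
  have log_norm : Real.log ‖(1 : ℂ) + x + y * I‖ = Real.log (1 + x) + Real.log (1 + v) / 2 := by
    simpa using log_norm_add_mul_I (show 1 + x ≠ 0 by linarith) y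
  have log_x_le := log_one_add_le_self (show -1 < x by linarith)
  have log_v_le := log_one_add_le_self (show -1 < v by linarith)
  have le_log_x := sub_sq_div_two_le_log_one_add hx
  have le_log_v := sub_sq_div_two_le_log_one_add v_nonneg
  rw [log_norm, abs_of_nonneg] <;> linarith

lemma abs_neg_log_norm_one_add_add_mul_I_le_of_sq_le {x y Y δ : ℝ} (hx : 0 ≤ x)
    (hy : y ^ 2 ≤ Y) (hxY : x * Y ≤ δ * (x ^ 2 + Y ^ 2)) :
    |-Real.log ‖(1 : ℂ) + x + y * I‖ + x + y ^ 2 / 2| ≤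
      (1 / 2 + δ) * x ^ 2 + (1 / 4 + δ) * Y ^ 2 := by
  calc _ ≤ x ^ 2 / 2 + x * y ^ 2 + y ^ 4 / 4 := abs_neg_log_norm_one_add_add_mul_I_le hx y
    _ = x ^ 2 / 2 + x * y ^ 2 + (y ^ 2) ^ 2 / 4 := by ring
    _ ≤ x ^ 2 / 2 + x * Y + Y ^ 2 / 4 := by gcongr
    _ ≤ (1 / 2 + δ) * x ^ 2 + (1 / 4 + δ) * Y ^ 2 := by linarith

lemma isLittleO_mul_sq_add_sq {ι : Type*} {l : Filter ι} {f g : ι → ℝ}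
    (hfg : f =o[l] g ∨ g =o[l] f) :
    (fun i ↦ f i * g i) =o[l] fun i ↦ f i ^ 2 + g i ^ 2 := by
  rcases hfg with f_small | g_small
  · refine (f_small.mul_isBigO (isBigO_refl g l)).trans_isBigO (.of_norm_le fun i ↦ ?_)
    rw [← sq, Real.norm_of_nonneg (sq_nonneg _)]
    exact le_add_of_nonneg_left (sq_nonneg _)
  · refine ((isBigO_refl f l).mul_isLittleO g_small).trans_isBigO (.of_norm_le fun i ↦ ?_)
    rw [← sq, Real.norm_of_nonneg (sq_nonneg _)]
    exact le_add_of_nonneg_right (sq_nonneg _)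

lemma isLittleO_rpow_mul_log_rpow_neg {α β : ℝ} (hβα : β < α) :
    (fun h : ℝ ↦ h ^ α * Real.log (h ^ (-α))) =o[𝓝[>] 0] fun h ↦ h ^ β := by
  have log_small : (fun h : ℝ ↦ -α * Real.log h) =o[𝓝[>] 0] fun h ↦ h ^ (β - α) :=
    (isLittleO_log_rpow_nhdsGT_zero (sub_neg.2 hβα)).const_mul_left (-α)
  refine ((isBigO_refl (fun h : ℝ ↦ h ^ α) _).mul_isLittleO log_small).congr' ?_ ?_
  · filter_upwards [self_mem_nhdsWithin] with h hh
    rw [Real.log_rpow hh]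
  · filter_upwards [self_mem_nhdsWithin] with h hh
    rw [← Real.rpow_add hh, add_sub_cancel]

lemma rpow_isLittleO_rpow_mul_log_rpow_neg {α β : ℝ} (hα : 0 < α) (hαβ : α ≤ β) :
    (fun h : ℝ ↦ h ^ β) =o[𝓝[>] 0] fun h ↦ h ^ α * Real.log (h ^ (-α)) := by
  have log_large : Tendsto (fun h : ℝ ↦ Real.log (h ^ (-α))) (𝓝[>] 0) atTop :=
    Real.tendsto_log_atTop.comp (tendsto_rpow_neg_nhdsGT_zero (neg_lt_zero.2 hα))
  have rpow_isBigO : (fun h : ℝ ↦ h ^ β) =O[𝓝[>] 0] fun h ↦ h ^ α := by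
    refine .of_norm_eventuallyLE ?_
    filter_upwards [Ioo_mem_nhdsGT one_pos] with h hh
    rw [Real.norm_of_nonneg (Real.rpow_nonneg hh.1.le _)]
    exact Real.rpow_le_rpow_of_exponent_ge hh.1 hh.2.le hαβ
  have one_isLittleO : (fun _ : ℝ ↦ (1 : ℝ)) =o[𝓝[>] 0] fun h ↦ Real.log (h ^ (-α)) :=
    isLittleO_const_left.2 (.inr (tendsto_norm_atTop_atTop.comp log_large))
  simpa only [mul_one] using rpow_isBigO.mul_isLittleO one_isLittleO

lemma eventually_rpow_mul_log_mul_le (α : ℝ) {C c : ℝ} (hC : C ≠ 0) (hc : 0 < c) :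
    ∀ᶠ h : ℝ in 𝓝[>] 0,
      h ^ α * Real.log (h ^ (-α)) * (C * h ^ (2 * α - 2)) ≤
        c * ((h ^ α * Real.log (h ^ (-α))) ^ 2 + (C * h ^ (2 * α - 2)) ^ 2) := by
  have incomparable :
      (fun h : ℝ ↦ h ^ α * Real.log (h ^ (-α))) =o[𝓝[>] 0] (fun h ↦ C * h ^ (2 * α - 2)) ∨
      (fun h : ℝ ↦ C * h ^ (2 * α - 2)) =o[𝓝[>] 0] (fun h ↦ h ^ α * Real.log (h ^ (-α))) := by
    rcases lt_or_ge α 2 with hα2 | hα2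
    · exact .inl ((isLittleO_rpow_mul_log_rpow_neg (by linarith)).const_mul_right hC)
    · have rpow_small := rpow_isLittleO_rpow_mul_log_rpow_neg (α := α) (β := 2 * α - 2)
        (by linarith) (by linarith)
      exact .inr (rpow_small.const_mul_left C)
  filter_upwards [(isLittleO_mul_sq_add_sq incomparable).def hc] with h hh
  rw [Real.norm_of_nonneg (add_nonneg (sq_nonneg _) (sq_nonneg _))] at hh
  exact (Real.le_norm_self _).trans hh

lemma rpow_two_mul {x : ℝ} (hx : 0 ≤ x) (a : ℝ) : x ^ (2 * a) = (x ^ a) ^ 2 := by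
  rw [mul_comm, ← Nat.cast_ofNat, Real.rpow_mul_natCast hx]

lemma sq_two_pi_mul_rpow_le {h : ℝ} (hh : 0 < h) {α c t : ℝ}
    (ht : π ^ 2 * t ^ 2 ≤ 4 * c * h ^ (-2 : ℝ)) :
    (2 * π * t * h ^ α) ^ 2 ≤ 16 * c * h ^ (2 * α - 2) := by
  have rpow_split : h ^ (2 * α - 2) = h ^ (-2 : ℝ) * (h ^ α) ^ 2 := by
    rw [← rpow_two_mul hh.le, ← Real.rpow_add hh, neg_add_eq_sub]
  calc (2 * π * t * h ^ α) ^ 2 = 4 * (π ^ 2 * t ^ 2) * (h ^ α) ^ 2 := by ring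
    _ ≤ 4 * (4 * c * h ^ (-2 : ℝ)) * (h ^ α) ^ 2 := by gcongr
    _ = 16 * c * h ^ (2 * α - 2) := by rw [rpow_split]; ring

theorem log_modulus_expansion_general {α ε : ℝ} (hα : 0 ≤ α) (hε : 0 < ε) :
    ∃ h₀ > 0, ∀ h : ℝ, h ∈ Set.Ioc 0 h₀ → ∀ t : ℝ,
      π ^ 2 * t ^ 2 ≤ 4 * ε ^ (-2 : ℝ) * h ^ (-2 : ℝ) →
      |-Real.log (‖
            ((1 : ℂ) + ((h ^ α * Real.log (h ^ (-α)) : ℝ) : ℂ)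
              + 2 * (π : ℂ) * Complex.I * (t : ℂ) * ((h ^ α : ℝ) : ℂ))‖)
          + h ^ α * Real.log (h ^ (-α)) + 2 * π ^ 2 * t ^ 2 * h ^ (2 * α)|
        ≤ 65 * ε ^ (-4 : ℝ) * h ^ (4 * α - 4)
          + h ^ (2 * α) * (Real.log (h ^ (-α))) ^ 2 := by
  have cross_term := eventually_rpow_mul_log_mul_le α (C := 16 * ε ^ (-2 : ℝ)) (c := 1 / 256)
    (by positivity) (by norm_num)
  obtain ⟨h₀, h₀_pos, h₀_spec⟩ := mem_nhdsGT_iff_exists_Ioc_subset.1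
    (cross_term.and (Ioo_mem_nhdsGT one_pos))
  refine ⟨h₀, h₀_pos, fun h hh t ht ↦ ?_⟩
  obtain ⟨cross_le, h_pos, h_lt_one⟩ := h₀_spec hh
  have log_nonneg : 0 ≤ Real.log (h ^ (-α)) := Real.log_nonneg
    (Real.one_le_rpow_of_pos_of_le_one_of_nonpos h_pos h_lt_one.le (neg_nonpos.2 hα))
  have expansion := abs_neg_log_norm_one_add_add_mul_I_le_of_sq_le (by positivity)
    (sq_two_pi_mul_rpow_le h_pos ht) cross_le
  set x := h ^ α * Real.log (h ^ (-α)) with hx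
  calc _ = |-Real.log ‖(1 : ℂ) + x + (2 * π * t * h ^ α : ℝ) * I‖ + x
          + (2 * π * t * h ^ α) ^ 2 / 2| := by
        rw [rpow_two_mul h_pos.le]; push_cast; ring_nf
    _ ≤ (1 / 2 + 1 / 256) * x ^ 2
          + (1 / 4 + 1 / 256) * (16 * ε ^ (-2 : ℝ) * h ^ (2 * α - 2)) ^ 2 := expansion
    _ ≤ x ^ 2 + 65 / 256 * (16 * ε ^ (-2 : ℝ) * h ^ (2 * α - 2)) ^ 2 := by
        linarith [sq_nonneg x]
    _ = _ := by
        rw [show (-4 : ℝ) = 2 * -2 by norm_num, show 4 * α - 4 = 2 * (2 * α - 2) by ring,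
          rpow_two_mul hε.le, rpow_two_mul h_pos.le, rpow_two_mul h_pos.le, hx]
        ring

theorem log_modulus_expansion (α ε : ℝ) (hα : 1 < α) (hε : ε ∈ Set.Ioo (0:ℝ) 1) :
    ∃ h₀ > 0, ∀ h : ℝ, h ∈ Set.Ioc 0 h₀ → ∀ k : ℤ,
      π ^ 2 * (k : ℝ) ^ 2 ≤ 4 * ε ^ (-2 : ℝ) * h ^ (-2 : ℝ) →
      |-Real.log (‖
            ((1 : ℂ) + ((h ^ α * Real.log (h ^ (-α)) : ℝ) : ℂ)
              + 2 * (π : ℂ) * Complex.I * (k : ℂ) * ((h ^ α : ℝ) : ℂ))‖)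
          + h ^ α * Real.log (h ^ (-α)) + 2 * π ^ 2 * (k : ℝ) ^ 2 * h ^ (2 * α)|
        ≤ 65 * ε ^ (-4 : ℝ) * h ^ (4 * α - 4)
          + h ^ (2 * α) * (Real.log (h ^ (-α))) ^ 2 := by
  obtain ⟨h₀, h₀_pos, bound⟩ := log_modulus_expansion_general (zero_le_one.trans hα.le) hε.1
  exact ⟨h₀, h₀_pos, fun h hh k hk ↦ by simpa only [ofReal_intCast] using bound h hh k hk⟩
end

section
/- Let α > 1 and ε ∈ (0,1) be given, and set y = h^(−α)·exp(h^(−α)) so that ln(y) = h^(−α) + ln(h^(−α)). Then there exists h₀ > 0 such that for all h ∈ (0, h₀] and all integers k with 2π|k| ≤ 4·ε^(−1)·h^(−1), one has |Log(ln(y) + 2πik)| / |ln(y) + 2πik| ≤ 2·h^α·ln(h^(−α)), where Log denotes the principal branch of the complex logarithm (with imaginary part in (−π, π]). -/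
open Complex Real

/-!
Write `x = h ^ (-α)` and `z = ln y + i t`, so that `‖z‖ ≥ Re z = x + ln x ≥ x`. Since
`‖Log z‖ ≤ ln ‖z‖ + π`, and both `ln r / r` and `π / r` decrease for `r ≥ e`, this lower bound alone
gives `‖Log z‖ / ‖z‖ ≤ (ln x + π) / x`. Finally `π ≤ ln x` as soon as `h ≤ exp (-π / α)`.
-/

theorem norm_clog_le_abs_log_norm_add_pi (z : ℂ) :
    ‖Complex.log z‖ ≤ |Real.log ‖z‖| + π :=
  calc ‖Complex.log z‖ ≤ |(Complex.log z).re| + |(Complex.log z).im| :=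
        Complex.norm_le_abs_re_add_abs_im _
    _ ≤ |Real.log ‖z‖| + π := by
        rw [Complex.log_re, Complex.log_im]
        gcongr
        exact Complex.abs_arg_le_pi z

theorem norm_clog_div_norm_le {x : ℝ} {z : ℂ} (hx : Real.exp 1 ≤ x) (hxz : x ≤ ‖z‖) :
    ‖Complex.log z‖ / ‖z‖ ≤ (Real.log x + π) / x := by
  have hx0 : 0 < x := (Real.exp_pos 1).trans_le hx
  have hz1 : 1 ≤ ‖z‖ := (Real.one_le_exp zero_le_one).trans (hx.trans hxz)
  calc ‖Complex.log z‖ / ‖z‖ ≤ (Real.log ‖z‖ + π) / ‖z‖ := by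
        gcongr
        simpa only [abs_of_nonneg (Real.log_nonneg hz1)] using norm_clog_le_abs_log_norm_add_pi z
    _ = Real.log ‖z‖ / ‖z‖ + π / ‖z‖ := add_div _ _ _
    _ ≤ Real.log x / x + π / x := by
        gcongr ?_ + π / ?_
        exact Real.log_div_self_antitoneOn hx (hx.trans hxz) hxz
    _ = (Real.log x + π) / x := (add_div _ _ _).symm

theorem norm_clog_div_norm_le_two_mul {x : ℝ} {z : ℂ} (hx : Real.exp π ≤ x) (hxz : x ≤ ‖z‖) :
    ‖Complex.log z‖ / ‖z‖ ≤ 2 * Real.log x / x := by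
  have hx0 : 0 < x := (Real.exp_pos π).trans_le hx
  have hπ : π ≤ Real.log x := (Real.le_log_iff_exp_le hx0).mpr hx
  have he : Real.exp 1 ≤ x := (Real.exp_le_exp.mpr (by linarith [pi_gt_three])).trans hx
  calc ‖Complex.log z‖ / ‖z‖ ≤ (Real.log x + π) / x := norm_clog_div_norm_le he hxz
    _ ≤ (Real.log x + Real.log x) / x := by gcongr
    _ = 2 * Real.log x / x := by rw [← two_mul]

theorem le_log_mul_exp_self {x : ℝ} (hx : 1 ≤ x) : x ≤ Real.log (x * Real.exp x) := by
  rw [Real.le_log_iff_exp_le (by positivity)]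
  exact le_mul_of_one_le_left (Real.exp_pos x).le hx

theorem le_norm_ofReal_add_mul_I (a t : ℝ) : a ≤ ‖(a : ℂ) + t * Complex.I‖ := by
  simpa using Complex.re_le_norm (a + t * Complex.I)

theorem exp_le_rpow_neg {α c h : ℝ} (hα : 0 < α) (hh : h ∈ Set.Ioc 0 (Real.exp (-c / α))) :
    Real.exp c ≤ h ^ (-α) :=
  calc Real.exp c = Real.exp (-c / α) ^ (-α) := by
        rw [← Real.exp_mul]
        congr 1
        field_simp
    _ ≤ h ^ (-α) := Real.rpow_le_rpow_of_nonpos hh.1 hh.2 (neg_nonpos.mpr hα.le)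

theorem log_over_log_bound_general {α h : ℝ} (hα : 0 < α)
    (hh : h ∈ Set.Ioc 0 (Real.exp (-π / α))) (t : ℝ) :
    ‖Complex.log (((Real.log (h ^ (-α) * Real.exp (h ^ (-α))) : ℝ) : ℂ) + t * Complex.I)‖
        / ‖((Real.log (h ^ (-α) * Real.exp (h ^ (-α))) : ℝ) : ℂ) + t * Complex.I‖
      ≤ 2 * h ^ α * Real.log (h ^ (-α)) := by
  have hx : Real.exp π ≤ h ^ (-α) := exp_le_rpow_neg hα hh
  have hx1 : 1 ≤ h ^ (-α) := (Real.one_le_exp pi_pos.le).trans hx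
  have hinv : h ^ α = (h ^ (-α))⁻¹ := by rw [Real.rpow_neg hh.1.le, inv_inv]
  calc _ ≤ 2 * Real.log (h ^ (-α)) / h ^ (-α) :=
        norm_clog_div_norm_le_two_mul hx <|
          (le_log_mul_exp_self hx1).trans (le_norm_ofReal_add_mul_I _ t)
    _ = 2 * h ^ α * Real.log (h ^ (-α)) := by rw [hinv]; ring

theorem log_over_log_bound (α ε : ℝ) (hα : 1 < α) (hε : ε ∈ Set.Ioo (0:ℝ) 1) :
    ∃ h₀ > 0, ∀ h : ℝ, h ∈ Set.Ioc 0 h₀ → ∀ k : ℤ,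
      2 * π * |(k : ℝ)| ≤ 4 * ε⁻¹ * h⁻¹ →
      ‖Complex.log
            (((Real.log (h ^ (-α) * Real.exp (h ^ (-α))) : ℝ) : ℂ)
              + 2 * (π : ℂ) * Complex.I * (k : ℂ))‖
          / ‖((Real.log (h ^ (-α) * Real.exp (h ^ (-α))) : ℝ) : ℂ)
              + 2 * (π : ℂ) * Complex.I * (k : ℂ)‖
        ≤ 2 * h ^ α * Real.log (h ^ (-α)) := by
  refine ⟨Real.exp (-π / α), Real.exp_pos _, fun h hh k _ ↦ ?_⟩
  simpa [mul_right_comm] using log_over_log_bound_general (zero_lt_one.trans hα) hh (2 * π * k)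
end
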